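/- Let 1 ≤ p < ∞ and -1 < α < ∞, let φ be an inner function, and let f₀(z) = Σ_{k=1}^{∞} z^{3^{k-1}} for z ∈ 𝔻. Then φ·f₀ belongs to the closure of φ·H^p(𝔻) = { φ·h : h ∈ H^p(𝔻) } in the weighted Bergman space A^p_α(𝔻) (with respect to the A^p_α norm), but φ·f₀ does not belong to φ·H^p(𝔻). -/

import Mathlib

/-! Why the theorem holds. Write `S_n` for the `n`-th partial sum of `f₀`. The series satisfies
`f₀(z) = S_n(z) + f₀(z^{3^n})`, and this identity drives both halves.

*Closure.* `S_n` is a polynomial, hence in `H^p`, and `|f₀(z^{3^n})| ≤ C_ε 3^{-εn} (1 - |z|)^{-ε}`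
for every `ε ∈ (0, 1]` (`norm_lacunary_tail_le`). For `ε p < α + 1` the right side is in the
weighted `L^p` space with norm tending to `0`, and `φ` is bounded, so `φ S_n → φ f₀` in `A^p_α`
(`tendsto_bergmanNorm`).

*Non-membership.* An inner function is not identically zero, so `φ f₀ = φ h` with `h ∈ H^p` forces
`f₀ = h ∈ H^p`, and hence `f₀` has bounded `L¹` means. As `S_n(z) = f₀(z) - f₀(z^{3^n})`, the `L¹`
norms of all `S_n` on the unit circle are then bounded (`integral_norm_circleSum_le`). On the other
hand `S_{n+1}(z) = z + S_n(z³)`; averaging over the cube roots of unity gives by induction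
`‖S_n‖₂² = n` and `‖S_n‖₄⁴ = 2n² - n`, so that `‖S_n‖₁ ≥ √n / 2` (`le_integral_norm_circleSum`),
a contradiction. -/

open MeasureTheory Filter Set Topology Real

noncomputable section

/-- The open unit disk in the complex plane. -/
def unitDisk : Set ℂ := Metric.ball 0 1

/-- The integrand `|f z|^p (1 - |z|^2)^α` appearing in the weighted Bergman norm. -/
def bergmanIntegrand (p α : ℝ) (f : ℂ → ℂ) (z : ℂ) : ℝ :=
  ‖f z‖ ^ p * (1 - ‖z‖ ^ 2) ^ α

/-- Membership in the weighted Bergman space `A^p_α(𝔻)`. -/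
def MemBergman (p α : ℝ) (f : ℂ → ℂ) : Prop :=
  DifferentiableOn ℂ f unitDisk ∧
    IntegrableOn (bergmanIntegrand p α f) unitDisk volume

/-- The weighted Bergman norm `‖f‖_{A^p_α}`. -/
def bergmanNorm (p α : ℝ) (f : ℂ → ℂ) : ℝ :=
  (((α + 1) / π) * ∫ z in unitDisk, bergmanIntegrand p α f z ∂volume) ^ (1 / p)

/-- The mean `(1/(2π)) ∫_0^{2π} |f(r e^{iθ})|^p dθ`. -/
def hardyIntegral (p : ℝ) (f : ℂ → ℂ) (r : ℝ) : ℝ :=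
  (1 / (2 * π)) * ∫ θ in (0:ℝ)..(2 * π), ‖f ((r : ℂ) * Complex.exp (θ * Complex.I))‖ ^ p

/-- Membership in the Hardy space `H^p(𝔻)`. -/
def MemHardy (p : ℝ) (f : ℂ → ℂ) : Prop :=
  DifferentiableOn ℂ f unitDisk ∧
    ∃ C : ℝ, ∀ r : ℝ, 0 ≤ r → r < 1 → hardyIntegral p f r ≤ C

/-- The Hardy norm `‖f‖_{H^p}`. -/
def hardyNorm (p : ℝ) (f : ℂ → ℂ) : ℝ :=
  ⨆ r : Set.Ico (0:ℝ) 1, (hardyIntegral p f ↑r) ^ (1 / p)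

/-- `f` has the radial limit `L` at the boundary point `e^{iθ}`. -/
def HasRadialLimit (f : ℂ → ℂ) (θ : ℝ) (L : ℂ) : Prop :=
  Tendsto (fun r : ℝ => f ((r : ℂ) * Complex.exp (θ * Complex.I))) (𝓝[<] (1:ℝ)) (𝓝 L)

/-- `φ` is an inner function: bounded analytic on the disk, with radial limits of
modulus one at almost every boundary point. -/
def IsInner (φ : ℂ → ℂ) : Prop :=
  DifferentiableOn ℂ φ unitDisk ∧ (∃ C : ℝ, ∀ z ∈ unitDisk, ‖φ z‖ ≤ C) ∧
    ∀ᵐ θ ∂(volume.restrict (Set.Ico (0:ℝ) (2 * π))),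
      ∃ L : ℂ, ‖L‖ = 1 ∧ HasRadialLimit φ θ L

/-- `g` belongs to `φ · H^p(𝔻)` (as a space of analytic functions on the disk). -/
def MemMulHardy (p : ℝ) (φ g : ℂ → ℂ) : Prop :=
  ∃ h : ℂ → ℂ, MemHardy p h ∧ Set.EqOn g (fun z => φ z * h z) unitDisk

/-- The lacunary series `f₀(z) = ∑_{k=1}^∞ z^{3^{k-1}}`. -/
def lacunary (z : ℂ) : ℂ := ∑' k : ℕ, z ^ (3 ^ k)

/-! ### The lacunary series and its partial sums -/

/-- The partial sum `∑_{k < n} z^{3^k}` of the lacunary series. -/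
def lacunaryPartial (n : ℕ) (z : ℂ) : ℂ := ∑ k ∈ Finset.range n, z ^ (3 ^ k)

lemma summable_lacunary_majorant {r : ℝ} (h0 : 0 ≤ r) (h1 : r < 1) :
    Summable fun k : ℕ => r ^ (3 ^ k) :=
  Summable.of_nonneg_of_le (fun _ => by positivity)
    (fun k => pow_le_pow_of_le_one h0 h1.le (Nat.lt_pow_self (by norm_num)).le)
    (summable_geometric_of_lt_one h0 h1)

lemma summable_lacunary {z : ℂ} (hz : ‖z‖ < 1) : Summable fun k : ℕ => z ^ (3 ^ k) :=
  Summable.of_norm (by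
    simpa only [norm_pow] using summable_lacunary_majorant (norm_nonneg z) hz)

/-- The tail of the lacunary series after `n` terms is the series itself at `z^{3^n}`. -/
lemma lacunary_eq_partial_add {z : ℂ} (hz : ‖z‖ < 1) (n : ℕ) :
    lacunary z = lacunaryPartial n z + lacunary (z ^ 3 ^ n) := by
  unfold lacunary lacunaryPartial
  rw [← (summable_lacunary hz).sum_add_tsum_nat_add n]
  congr 1
  refine tsum_congr fun k => ?_
  rw [← pow_mul]
  congr 1
  ring

lemma differentiableOn_lacunary : DifferentiableOn ℂ lacunary unitDisk := by
  intro z hz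
  have hz1 : ‖z‖ < 1 := by simpa [unitDisk] using hz
  obtain ⟨r, hzr, hr1⟩ := exists_between hz1
  have hr0 : 0 ≤ r := (norm_nonneg z).trans hzr.le
  have h : DifferentiableOn ℂ (fun w : ℂ => ∑' k : ℕ, w ^ (3 ^ k)) (Metric.ball 0 r) := by
    refine Complex.differentiableOn_tsum_of_summable_norm (summable_lacunary_majorant hr0 hr1)
      (fun k => by fun_prop) Metric.isOpen_ball ?_
    intro k w hw
    have : ‖w‖ < r := by simpa using hw
    rw [norm_pow]
    gcongr
  exact (h.differentiableAt (Metric.isOpen_ball.mem_nhds (by simpa using hzr))).differentiableWithinAt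

lemma continuous_lacunaryPartial (n : ℕ) : Continuous (lacunaryPartial n) := by
  unfold lacunaryPartial
  fun_prop

lemma norm_lacunaryPartial_le (n : ℕ) {z : ℂ} (hz : ‖z‖ ≤ 1) : ‖lacunaryPartial n z‖ ≤ n := by
  unfold lacunaryPartial
  refine (norm_sum_le _ _).trans ?_
  refine (Finset.sum_le_card_nsmul _ _ 1 fun k _ => ?_).trans (by simp)
  rw [norm_pow]
  exact pow_le_one₀ (norm_nonneg z) hz

lemma norm_mul_exp (r θ : ℝ) (hr : 0 ≤ r) : ‖(r : ℂ) * Complex.exp (θ * Complex.I)‖ = r := by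
  rw [norm_mul, Complex.norm_exp_ofReal_mul_I, Complex.norm_real, Real.norm_eq_abs,
    abs_of_nonneg hr, mul_one]

lemma memHardy_lacunaryPartial {p : ℝ} (hp : 1 ≤ p) (n : ℕ) : MemHardy p (lacunaryPartial n) := by
  refine ⟨by unfold lacunaryPartial; fun_prop, (n : ℝ) ^ p, fun r hr0 hr1 => ?_⟩
  have h : ‖∫ θ in (0:ℝ)..(2 * π),
      ‖lacunaryPartial n ((r : ℂ) * Complex.exp (θ * Complex.I))‖ ^ p‖
        ≤ (n : ℝ) ^ p * |2 * π - 0| := by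
    refine intervalIntegral.norm_integral_le_of_norm_le_const fun θ _ => ?_
    rw [Real.norm_eq_abs, abs_of_nonneg (by positivity)]
    have := norm_lacunaryPartial_le n (z := (r : ℂ) * Complex.exp (θ * Complex.I))
      (by rw [norm_mul_exp r θ hr0]; exact hr1.le)
    gcongr
  have h2 := (le_abs_self _).trans h
  rw [sub_zero, abs_of_pos two_pi_pos] at h2
  unfold hardyIntegral
  rw [one_div, inv_mul_le_iff₀ two_pi_pos]
  linarith

/-! ### Approximation in the Bergman norm -/

/-- For `0 ≤ ε ≤ 1`, the growth bound `r^m ≤ (m (1 - r))^{-ε}`, which follows from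
`r^m ≤ exp (-m (1 - r))` and `t^ε ≤ exp t`. -/
lemma pow_le_rpow_neg {r ε : ℝ} (h0 : 0 ≤ r) (h1 : r < 1) (hε0 : 0 ≤ ε) (hε1 : ε ≤ 1)
    {m : ℕ} (hm : 0 < m) : r ^ m ≤ ((m : ℝ) * (1 - r)) ^ (-ε) := by
  have ht : 0 < (m : ℝ) * (1 - r) := mul_pos (by exact_mod_cast hm) (by linarith)
  set t := (m : ℝ) * (1 - r) with htdef
  have hle : r ≤ Real.exp (-(1 - r)) := by
    have := Real.add_one_le_exp (-(1 - r))
    linarith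
  calc r ^ m ≤ Real.exp (-(1 - r)) ^ m := by gcongr
    _ = Real.exp (-t) := by rw [← Real.exp_nat_mul, htdef]; congr 1; ring
    _ ≤ t ^ (-ε) := by
      rw [Real.rpow_def_of_pos ht, Real.exp_le_exp]
      have hlog : Real.log t ≤ t - 1 := Real.log_le_sub_one_of_pos ht
      rcases le_total (Real.log t) 0 with h | h
      · nlinarith
      · nlinarith

/-- The tail of the lacunary series after `n` terms is at most `C qⁿ (1 - |z|)^{-ε}` with
`q = 3^{-ε}` and `C = 1 / (1 - q)`. -/
lemma norm_lacunary_tail_le {ε : ℝ} (hε0 : 0 < ε) (hε1 : ε ≤ 1) {z : ℂ} (hz : ‖z‖ < 1) (n : ℕ) :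
    ‖lacunary (z ^ 3 ^ n)‖ ≤
      ((3:ℝ) ^ (-ε)) ^ n * (1 - (3:ℝ) ^ (-ε))⁻¹ * (1 - ‖z‖) ^ (-ε) := by
  have hq0 : 0 ≤ (3:ℝ) ^ (-ε) := by positivity
  have hq1 : (3:ℝ) ^ (-ε) < 1 := Real.rpow_lt_one_of_one_lt_of_neg (by norm_num) (by linarith)
  have hs : HasSum (fun k : ℕ => ((3:ℝ) ^ (-ε)) ^ k * (((3:ℝ) ^ (-ε)) ^ n * (1 - ‖z‖) ^ (-ε)))
      ((1 - (3:ℝ) ^ (-ε))⁻¹ * (((3:ℝ) ^ (-ε)) ^ n * (1 - ‖z‖) ^ (-ε))) :=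
    (hasSum_geometric_of_lt_one hq0 hq1).mul_right _
  unfold lacunary
  refine (tsum_of_norm_bounded hs fun k => ?_).trans (le_of_eq (by ring))
  rw [← pow_mul, ← pow_add, norm_pow]
  refine (pow_le_rpow_neg (norm_nonneg z) hz hε0.le hε1 (by positivity)).trans (le_of_eq ?_)
  rw [Real.mul_rpow (by positivity) (by linarith), Nat.cast_pow, Nat.cast_ofNat, ← mul_assoc,
    ← pow_add, add_comm k n, ← Real.rpow_natCast, ← Real.rpow_mul (by norm_num),
    ← Real.rpow_natCast ((3:ℝ) ^ (-ε)), ← Real.rpow_mul (by norm_num), mul_comm (-ε)]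

lemma integrableOn_one_sub_norm_rpow {β : ℝ} (hβ : -1 < β) :
    IntegrableOn (fun z : ℂ => (1 - ‖z‖) ^ β) unitDisk volume := by
  unfold unitDisk
  rw [integrableOn_fun_norm_addHaar volume (f := fun y : ℝ => (1 - y) ^ β),
    Complex.finrank_real_complex]
  have h1 : IntervalIntegrable (fun y : ℝ => (1 - y) ^ β) volume 0 1 := by
    simpa using ((intervalIntegral.intervalIntegrable_rpow' hβ (a := 0) (b := 1)).comp_sub_left 1).symm
  have h2 : IntervalIntegrable (fun y : ℝ => y ^ (2 - 1) • (1 - y) ^ β) volume 0 1 := by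
    simpa only [smul_eq_mul] using h1.continuousOn_mul
      (g := fun y : ℝ => y ^ (2 - 1)) (by fun_prop)
  exact ((intervalIntegrable_iff_integrableOn_Ioc_of_le zero_le_one).1 h2).mono_set Ioo_subset_Ioc_self

lemma one_sub_sq_rpow_le (α : ℝ) {r : ℝ} (h0 : 0 ≤ r) (h1 : r < 1) :
    (1 - r ^ 2) ^ α ≤ 2 ^ |α| * (1 - r) ^ α := by
  have : 1 - r ^ 2 = (1 + r) * (1 - r) := by ring
  rw [this, Real.mul_rpow (by linarith) (by linarith)]
  have h : (1 + r) ^ α ≤ 2 ^ |α| :=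
    (Real.rpow_le_rpow_of_exponent_le (by linarith) (le_abs_self α)).trans
      (Real.rpow_le_rpow (by linarith) (by linarith) (abs_nonneg α))
  have : 0 ≤ (1 - r) ^ α := Real.rpow_nonneg (by linarith) α
  gcongr

/-- Bounded multiples of the partial sums converge in the Bergman norm: the tail estimate gives
the bound `C q^{np} (1 - |z|)^{α - εp}` for the integrand, and `α - εp > -1` for small `ε`. -/
lemma tendsto_bergmanNorm (p α : ℝ) (hp : 1 ≤ p) (hα : -1 < α)
    (φ : ℂ → ℂ) (hφ : ∃ C : ℝ, ∀ z ∈ unitDisk, ‖φ z‖ ≤ C) :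
    Tendsto (fun n => bergmanNorm p α
      ((fun z => φ z * lacunaryPartial n z) - fun z => φ z * lacunary z)) atTop (𝓝 0) := by
  obtain ⟨C, hC⟩ := hφ
  have hC0 : 0 ≤ C := (norm_nonneg _).trans (hC 0 (by simp [unitDisk]))
  have hp0 : 0 < p := by linarith
  obtain ⟨ε, hε0, hε1, hβ⟩ : ∃ ε : ℝ, 0 < ε ∧ ε ≤ 1 ∧ -1 < α - ε * p := by
    refine ⟨min 1 ((α + 1) / (2 * p)), lt_min one_pos (div_pos (by linarith) (by linarith)),
      min_le_left _ _, ?_⟩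
    have h1 : min 1 ((α + 1) / (2 * p)) * p ≤ (α + 1) / (2 * p) * p := by
      gcongr
      exact min_le_right _ _
    have h2 : (α + 1) / (2 * p) * p = (α + 1) / 2 := by field_simp
    linarith
  set q : ℝ := (3:ℝ) ^ (-ε) with hq
  have hq0 : 0 ≤ q := by positivity
  have hq1 : q < 1 := Real.rpow_lt_one_of_one_lt_of_neg (by norm_num) (by linarith)
  have hqi : 0 ≤ (1 - q)⁻¹ := inv_nonneg.2 (by linarith)
  set I : ℝ := ∫ z in unitDisk, (1 - ‖z‖) ^ (α - ε * p) ∂volume with hI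
  have hint := integrableOn_one_sub_norm_rpow hβ
  have key : ∀ n : ℕ, ∫ z in unitDisk, bergmanIntegrand p α
      ((fun z => φ z * lacunaryPartial n z) - fun z => φ z * lacunary z) z ∂volume ≤
      (C * (q ^ n * (1 - q)⁻¹)) ^ p * 2 ^ |α| * I := by
    intro n
    rw [hI, ← integral_const_mul]
    have hmem : ∀ᵐ z ∂(volume.restrict unitDisk), z ∈ unitDisk :=
      ae_restrict_mem Metric.isOpen_ball.measurableSet
    refine integral_mono_of_nonneg ?_ (hint.const_mul _) ?_
    · filter_upwards [hmem] with z hz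
      have hz1 : ‖z‖ < 1 := by simpa [unitDisk] using hz
      have : 0 ≤ 1 - ‖z‖ ^ 2 := by nlinarith [norm_nonneg z]
      unfold bergmanIntegrand
      simp only [Pi.zero_apply]
      positivity
    · filter_upwards [hmem] with z hz
      have hz1 : ‖z‖ < 1 := by simpa [unitDisk] using hz
      have hz2 : 0 < 1 - ‖z‖ := by linarith
      unfold bergmanIntegrand
      have hb : ‖((fun z => φ z * lacunaryPartial n z) - fun z => φ z * lacunary z) z‖ ≤
          C * (q ^ n * (1 - q)⁻¹) * (1 - ‖z‖) ^ (-ε) := by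
        have : ((fun z => φ z * lacunaryPartial n z) - fun z => φ z * lacunary z) z
            = -(φ z * lacunary (z ^ 3 ^ n)) := by
          simp only [Pi.sub_apply]
          rw [lacunary_eq_partial_add hz1 n]
          ring
        rw [this, norm_neg, norm_mul, mul_assoc]
        exact mul_le_mul (hC z hz) (norm_lacunary_tail_le hε0 hε1 hz1 n) (norm_nonneg _) hC0
      have hs : 0 ≤ 1 - ‖z‖ ^ 2 := by nlinarith [norm_nonneg z]
      calc _ ≤ (C * (q ^ n * (1 - q)⁻¹) * (1 - ‖z‖) ^ (-ε)) ^ p * (2 ^ |α| * (1 - ‖z‖) ^ α) := by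
            gcongr
            exact one_sub_sq_rpow_le α (norm_nonneg z) hz1
        _ = (C * (q ^ n * (1 - q)⁻¹)) ^ p * 2 ^ |α| * (1 - ‖z‖) ^ (α - ε * p) := by
            rw [Real.mul_rpow (by positivity) (by positivity), ← Real.rpow_mul hz2.le,
              sub_eq_neg_add α, Real.rpow_add hz2, neg_mul]
            ring
  have hnonneg : ∀ n : ℕ, 0 ≤ ∫ z in unitDisk, bergmanIntegrand p α
      ((fun z => φ z * lacunaryPartial n z) - fun z => φ z * lacunary z) z ∂volume := by
    intro n
    refine setIntegral_nonneg Metric.isOpen_ball.measurableSet fun z hz => ?_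
    have hz1 : ‖z‖ < 1 := by simpa [unitDisk] using hz
    have : 0 ≤ 1 - ‖z‖ ^ 2 := by nlinarith [norm_nonneg z]
    unfold bergmanIntegrand
    positivity
  have hlim : Tendsto (fun n : ℕ => (C * (q ^ n * (1 - q)⁻¹)) ^ p * 2 ^ |α| * I) atTop (𝓝 0) := by
    have h1 : Tendsto (fun n : ℕ => C * (q ^ n * (1 - q)⁻¹)) atTop (𝓝 0) := by
      simpa using ((tendsto_pow_atTop_nhds_zero_of_lt_one hq0 hq1).mul_const (1 - q)⁻¹).const_mul C
    have h2 := h1.rpow_const (p := p) (Or.inr hp0.le)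
    rw [Real.zero_rpow hp0.ne'] at h2
    simpa using (h2.mul_const (2 ^ |α|)).mul_const I
  have hlim2 := squeeze_zero hnonneg key hlim
  have hlim3 := (hlim2.const_mul ((α + 1) / π)).rpow_const (p := 1 / p) (Or.inr (by positivity))
  rw [mul_zero, Real.zero_rpow (by positivity)] at hlim3
  exact hlim3

/-! ### Moments of the partial sums on the unit circle -/

/-- The map `θ ↦ m θ` preserves the mean of a `2π`-periodic function. -/
lemma integral_comp_nat_mul {g : ℝ → ℝ} (hg : Continuous g) (hper : Function.Periodic g (2 * π))
    {m : ℕ} (hm : 0 < m) :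
    ∫ θ in (0:ℝ)..(2 * π), g (m * θ) = ∫ θ in (0:ℝ)..(2 * π), g θ := by
  have hm' : (m : ℝ) ≠ 0 := by exact_mod_cast hm.ne'
  rw [intervalIntegral.integral_comp_mul_left _ hm']
  have h := hper.intervalIntegral_add_zsmul_eq (m : ℤ) 0 (fun a b => hg.intervalIntegrable a b)
  simp only [zero_add, natCast_zsmul, nsmul_eq_mul] at h
  rw [mul_zero, h, smul_eq_mul, ← mul_assoc, inv_mul_cancel₀ hm', one_mul]

/-- The mean of a `2π`-periodic function is unchanged by averaging over rotations of order 3. -/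
lemma integral_eq_average {g : ℝ → ℝ} (hg : Continuous g) (hper : Function.Periodic g (2 * π)) :
    ∫ θ in (0:ℝ)..(2 * π), g θ =
      ∫ θ in (0:ℝ)..(2 * π), (g θ + g (θ + 2 * π / 3) + g (θ + 4 * π / 3)) / 3 := by
  have hshift : ∀ c : ℝ, ∫ θ in (0:ℝ)..(2 * π), g (θ + c) = ∫ θ in (0:ℝ)..(2 * π), g θ := by
    intro c
    rw [intervalIntegral.integral_comp_add_right]
    have := hper.intervalIntegral_add_eq c 0
    rw [zero_add] at this
    rw [zero_add, add_comm (2 * π) c, this]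
  have hi : ∀ c : ℝ, IntervalIntegrable (fun θ => g (θ + c)) volume 0 (2 * π) := fun c =>
    (hg.comp (continuous_id.add continuous_const)).intervalIntegrable _ _
  have h0 : IntervalIntegrable g volume 0 (2 * π) := hg.intervalIntegrable _ _
  rw [intervalIntegral.integral_div, intervalIntegral.integral_add (h0.add (hi _)) (hi _),
    intervalIntegral.integral_add h0 (hi _), hshift, hshift]
  ring

/-- The trace of the partial sum on the unit circle. -/
def circleSum (n : ℕ) (θ : ℝ) : ℂ := lacunaryPartial n (Complex.exp (θ * Complex.I))

lemma continuous_circleSum (n : ℕ) : Continuous (circleSum n) :=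
  (continuous_lacunaryPartial n).comp (by fun_prop)

lemma periodic_circleSum (n : ℕ) : Function.Periodic (circleSum n) (2 * π) := by
  intro θ
  unfold circleSum
  congr 1
  push_cast
  rw [add_mul, Complex.exp_add, Complex.exp_two_pi_mul_I, mul_one]

lemma circleSum_succ (n : ℕ) (θ : ℝ) :
    circleSum (n + 1) θ = Complex.exp (θ * Complex.I) + circleSum n ((3 : ℕ) * θ) := by
  unfold circleSum lacunaryPartial
  rw [Finset.sum_range_succ', add_comm]
  congr 1
  · simp
  · refine Finset.sum_congr rfl fun k _ => ?_
    rw [← Complex.exp_nat_mul, ← Complex.exp_nat_mul]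
    congr 1
    push_cast
    ring

/-- Rotating by a third of a turn changes only the first term of the partial sum. -/
lemma normSq_circleSum_succ (n : ℕ) (θ : ℝ) (j : ℕ) :
    ‖circleSum (n + 1) (θ + j * (2 * π / 3))‖ ^ 2 = 1 + ‖circleSum n ((3 : ℕ) * θ)‖ ^ 2 +
      2 * (Real.cos (θ + j * (2 * π / 3)) * (circleSum n ((3 : ℕ) * θ)).re +
        Real.sin (θ + j * (2 * π / 3)) * (circleSum n ((3 : ℕ) * θ)).im) := by
  have hrot : circleSum n ((3 : ℕ) * (θ + j * (2 * π / 3))) = circleSum n ((3 : ℕ) * θ) := by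
    have h := (periodic_circleSum n).nat_mul j ((3 : ℕ) * θ)
    rw [← h]
    congr 1
    push_cast
    ring
  rw [circleSum_succ, hrot, Complex.sq_norm, Complex.sq_norm, Complex.normSq_apply,
    Complex.normSq_apply, Complex.add_re, Complex.add_im, Complex.exp_ofReal_mul_I_re,
    Complex.exp_ofReal_mul_I_im]
  linear_combination Real.sin_sq_add_cos_sq (θ + j * (2 * π / 3))

lemma cos_two_pi_div_three' : Real.cos (2 * π / 3) = -1 / 2 := by
  rw [show 2 * π / 3 = π - π / 3 by ring, Real.cos_pi_sub, Real.cos_pi_div_three]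
  norm_num

lemma sin_two_pi_div_three' : Real.sin (2 * π / 3) = √3 / 2 := by
  rw [show 2 * π / 3 = π - π / 3 by ring, Real.sin_pi_sub, Real.sin_pi_div_three]

lemma cos_four_pi_div_three' : Real.cos (4 * π / 3) = -1 / 2 := by
  rw [show 4 * π / 3 = π / 3 + π by ring, Real.cos_add_pi, Real.cos_pi_div_three]
  norm_num

lemma sin_four_pi_div_three' : Real.sin (4 * π / 3) = -√3 / 2 := by
  rw [show 4 * π / 3 = π / 3 + π by ring, Real.sin_add_pi, Real.sin_pi_div_three]
  ring

/-- Averages over the three rotations of `|S_{n+1}|²` and `|S_{n+1}|⁴` in terms of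
`q = |S_n(3θ)|²`: they are `1 + q` and `1 + 4q + q²`, since the cross terms have mean zero and
mean square `q / 2`. -/
lemma average_moments (n : ℕ) (θ : ℝ) :
    (‖circleSum (n + 1) θ‖ ^ 2 + ‖circleSum (n + 1) (θ + 2 * π / 3)‖ ^ 2 +
        ‖circleSum (n + 1) (θ + 4 * π / 3)‖ ^ 2) / 3 = 1 + ‖circleSum n ((3 : ℕ) * θ)‖ ^ 2 ∧
    (‖circleSum (n + 1) θ‖ ^ 4 + ‖circleSum (n + 1) (θ + 2 * π / 3)‖ ^ 4 +
        ‖circleSum (n + 1) (θ + 4 * π / 3)‖ ^ 4) / 3 =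
      1 + 4 * ‖circleSum n ((3 : ℕ) * θ)‖ ^ 2 + ‖circleSum n ((3 : ℕ) * θ)‖ ^ 4 := by
  have h0 := normSq_circleSum_succ n θ 0
  have h1 := normSq_circleSum_succ n θ 1
  have h2 := normSq_circleSum_succ n θ 2
  rw [show θ + (0 : ℕ) * (2 * π / 3) = θ by push_cast; ring] at h0
  rw [show θ + (1 : ℕ) * (2 * π / 3) = θ + 2 * π / 3 by push_cast; ring, Real.cos_add,
    Real.sin_add, cos_two_pi_div_three', sin_two_pi_div_three'] at h1
  rw [show θ + (2 : ℕ) * (2 * π / 3) = θ + 4 * π / 3 by push_cast; ring, Real.cos_add,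
    Real.sin_add, cos_four_pi_div_three', sin_four_pi_div_three'] at h2
  have hq : ‖circleSum n ((3 : ℕ) * θ)‖ ^ 2 = (circleSum n ((3 : ℕ) * θ)).re ^ 2 +
      (circleSum n ((3 : ℕ) * θ)).im ^ 2 := by
    rw [Complex.sq_norm, Complex.normSq_apply]; ring
  have hcs := Real.sin_sq_add_cos_sq θ
  have h3 : √3 ^ 2 = 3 := Real.sq_sqrt (by norm_num)
  generalize (circleSum n ((3 : ℕ) * θ)).re = a at *
  generalize (circleSum n ((3 : ℕ) * θ)).im = b at *
  generalize Real.cos θ = x at *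
  generalize Real.sin θ = y at *
  generalize √3 = s at *
  have e4 : ∀ t : ℝ, t ^ 4 = (t ^ 2) ^ 2 := fun t => by ring
  refine ⟨by rw [h0, h1, h2]; ring, ?_⟩
  rw [e4, e4 ‖circleSum (n + 1) (θ + 2 * π / 3)‖, e4 ‖circleSum (n + 1) (θ + 4 * π / 3)‖,
    e4 ‖circleSum n ((3 : ℕ) * θ)‖, h0, h1, h2]
  generalize ‖circleSum n ((3 : ℕ) * θ)‖ ^ 2 = Q at *
  -- The cross term and its quadrature component have squares summing to `Q`.
  have hcd : (x * a + y * b) ^ 2 + (x * b - y * a) ^ 2 = Q := by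
    rw [hq]; linear_combination (a ^ 2 + b ^ 2) * hcs
  linear_combination 2 * hcd + (2 / 3) * (x * b - y * a) ^ 2 * h3

lemma integral_normSq_circleSum (n : ℕ) :
    ∫ θ in (0:ℝ)..(2 * π), ‖circleSum n θ‖ ^ 2 = 2 * π * n := by
  induction n with
  | zero => simp [circleSum, lacunaryPartial]
  | succ n ih =>
    have hc := continuous_circleSum
    rw [integral_eq_average (g := fun θ => ‖circleSum (n + 1) θ‖ ^ 2) ((hc _).norm.pow 2)
      (fun θ => by simp only [periodic_circleSum (n + 1) θ])]
    simp only [(average_moments n _).1]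
    rw [intervalIntegral.integral_add (by simp)
      (Continuous.intervalIntegrable (by have := hc n; fun_prop) _ _),
      integral_comp_nat_mul (g := fun θ => ‖circleSum n θ‖ ^ 2) ((hc _).norm.pow 2)
      (fun θ => by simp only [periodic_circleSum n θ]) (by norm_num), ih]
    simp
    ring

lemma integral_norm_pow_four_circleSum (n : ℕ) :
    ∫ θ in (0:ℝ)..(2 * π), ‖circleSum n θ‖ ^ 4 = 2 * π * (2 * n ^ 2 - n) := by
  induction n with
  | zero => simp [circleSum, lacunaryPartial]
  | succ n ih =>
    have hc := continuous_circleSum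
    rw [integral_eq_average (g := fun θ => ‖circleSum (n + 1) θ‖ ^ 4) ((hc _).norm.pow 4)
      (fun θ => by simp only [periodic_circleSum (n + 1) θ])]
    simp only [(average_moments n _).2]
    rw [intervalIntegral.integral_add
        (Continuous.intervalIntegrable (by have := hc n; fun_prop) _ _)
        (Continuous.intervalIntegrable (by have := hc n; fun_prop) _ _),
      intervalIntegral.integral_add (by simp)
        (Continuous.intervalIntegrable (by have := hc n; fun_prop) _ _),
      intervalIntegral.integral_const_mul,
      integral_comp_nat_mul (g := fun θ => ‖circleSum n θ‖ ^ 2) ((hc _).norm.pow 2)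
        (fun θ => by simp only [periodic_circleSum n θ]) (by norm_num),
      integral_comp_nat_mul (g := fun θ => ‖circleSum n θ‖ ^ 4) ((hc _).norm.pow 4)
        (fun θ => by simp only [periodic_circleSum n θ]) (by norm_num), ih,
      integral_normSq_circleSum]
    simp
    ring

/-- The `L¹` means of the partial sums grow at least like `√n`; here `n = N²`. The second and
fourth moments enter through `t ≥ t² / N - t⁴ / (4 N³)`. -/
lemma le_integral_norm_circleSum {N : ℕ} (hN : 0 < N) :
    π * N ≤ ∫ θ in (0:ℝ)..(2 * π), ‖circleSum (N ^ 2) θ‖ := by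
  have hN' : (0:ℝ) < N := by exact_mod_cast hN
  have hc := continuous_circleSum (N ^ 2)
  have hmono : ∫ θ in (0:ℝ)..(2 * π), ((1 / (N:ℝ)) * ‖circleSum (N ^ 2) θ‖ ^ 2 -
      (1 / (4 * (N:ℝ) ^ 3)) * ‖circleSum (N ^ 2) θ‖ ^ 4) ≤
      ∫ θ in (0:ℝ)..(2 * π), ‖circleSum (N ^ 2) θ‖ := by
    refine intervalIntegral.integral_mono_on two_pi_pos.le
      (Continuous.intervalIntegrable (by fun_prop) _ _)
      (Continuous.intervalIntegrable (by fun_prop) _ _) fun θ _ => ?_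
    obtain ⟨s, hs⟩ : ∃ s : ℝ, ‖circleSum (N ^ 2) θ‖ = N * s :=
      ⟨‖circleSum (N ^ 2) θ‖ / N, by field_simp⟩
    have hs0 : 0 ≤ s := by
      by_contra hneg
      nlinarith [norm_nonneg (circleSum (N ^ 2) θ), not_le.1 hneg]
    rw [hs]
    have e : 1 / (N:ℝ) * (N * s) ^ 2 - 1 / (4 * (N:ℝ) ^ 3) * (N * s) ^ 4 =
        N * (s * (s - s ^ 3 / 4)) := by
      field_simp
    have hb : s - s ^ 3 / 4 ≤ 1 := by 
      nlinarith [mul_nonneg hs0 (sq_nonneg (s - 6 / 5))]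
    rw [e]
    have : s * (s - s ^ 3 / 4) ≤ s := by nlinarith
    gcongr
  refine le_trans (le_of_eq_of_le
    (b := 2 * π * (1 / (N:ℝ) * N ^ 2 - 1 / (4 * (N:ℝ) ^ 3) * (2 * (N ^ 2) ^ 2))) ?_ ?_) hmono
  · field_simp
    ring
  · rw [intervalIntegral.integral_sub (Continuous.intervalIntegrable (by fun_prop) _ _)
      (Continuous.intervalIntegrable (by fun_prop) _ _), intervalIntegral.integral_const_mul,
      intervalIntegral.integral_const_mul, integral_normSq_circleSum,
      integral_norm_pow_four_circleSum]
    have : 0 ≤ 2 * π * (1 / (4 * (N:ℝ) ^ 3) * N ^ 2) := by positivity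
    push_cast
    linarith

/-! ### The lacunary series is not in the Hardy space -/

lemma continuous_lacunary_circle {r : ℝ} (h0 : 0 ≤ r) (h1 : r < 1) :
    Continuous fun θ : ℝ => lacunary ((r : ℂ) * Complex.exp (θ * Complex.I)) :=
  differentiableOn_lacunary.continuousOn.comp_continuous (by fun_prop) fun θ => by
    simp only [unitDisk, mem_ball_zero_iff, norm_mul_exp r θ h0, h1]

/-- Since `S_n(z) = f₀(z) - f₀(z^{3^n})`, a bound on the `L¹` means of `f₀` passes to all the
partial sums, even on the unit circle. -/
lemma integral_norm_circleSum_le {K : ℝ}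
    (hK : ∀ r : ℝ, 0 ≤ r → r < 1 →
      ∫ θ in (0:ℝ)..(2 * π), ‖lacunary ((r : ℂ) * Complex.exp (θ * Complex.I))‖ ≤ K) (n : ℕ) :
    ∫ θ in (0:ℝ)..(2 * π), ‖circleSum n θ‖ ≤ 2 * K := by
  have hbound : ∀ r : ℝ, 0 ≤ r → r < 1 → ∫ θ in (0:ℝ)..(2 * π),
      ‖lacunaryPartial n ((r : ℂ) * Complex.exp (θ * Complex.I))‖ ≤ 2 * K := by
    intro r h0 h1
    have hr0 : 0 ≤ r ^ 3 ^ n := by positivity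
    have hr1 : r ^ 3 ^ n < 1 := pow_lt_one₀ h0 h1 (by positivity)
    set g : ℝ → ℝ := fun θ => ‖lacunary (((r ^ 3 ^ n : ℝ) : ℂ) * Complex.exp (θ * Complex.I))‖
      with hg
    have hgc : Continuous g := (continuous_lacunary_circle hr0 hr1).norm
    have hgp : Function.Periodic g (2 * π) := by
      intro θ
      simp only [hg]
      congr 3
      push_cast
      rw [add_mul, Complex.exp_add, Complex.exp_two_pi_mul_I, mul_one]
    have hfc := (continuous_lacunary_circle h0 h1).norm
    have hgc' : Continuous fun θ : ℝ => g ((3 ^ n : ℕ) * θ) := hgc.comp (by fun_prop)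
    calc _ ≤ ∫ θ in (0:ℝ)..(2 * π), (‖lacunary ((r : ℂ) * Complex.exp (θ * Complex.I))‖ +
            g ((3 ^ n : ℕ) * θ)) := by
          refine intervalIntegral.integral_mono_on two_pi_pos.le
            (((continuous_lacunaryPartial n).comp (by fun_prop)).norm.intervalIntegrable _ _)
            ((hfc.add hgc').intervalIntegrable _ _) fun θ _ => ?_
          have h := lacunary_eq_partial_add (z := (r : ℂ) * Complex.exp (θ * Complex.I))
            (by rw [norm_mul_exp r θ h0]; exact h1) n
          have hpow : ((r : ℂ) * Complex.exp (θ * Complex.I)) ^ 3 ^ n =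
              ((r ^ 3 ^ n : ℝ) : ℂ) * Complex.exp (((3 ^ n : ℕ) * θ : ℝ) * Complex.I) := by
            rw [mul_pow, ← Complex.exp_nat_mul]
            push_cast
            congr 2
            ring
          rw [hpow] at h
          rw [eq_sub_of_add_eq h.symm]
          exact norm_sub_le _ _
      _ ≤ K + K := by
          rw [intervalIntegral.integral_add (hfc.intervalIntegrable _ _)
            (hgc'.intervalIntegrable _ _), integral_comp_nat_mul hgc hgp (by positivity)]
          exact add_le_add (hK r h0 h1) (hK _ hr0 hr1)
      _ = 2 * K := by ring
  have hcont : Continuous fun r : ℝ => ∫ θ in (0:ℝ)..(2 * π),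
      ‖lacunaryPartial n ((r : ℂ) * Complex.exp (θ * Complex.I))‖ := by
    refine intervalIntegral.continuous_parametric_intervalIntegral_of_continuous' ?_ _ _
    have := continuous_lacunaryPartial n
    unfold Function.uncurry
    fun_prop
  have hlim := (hcont.tendsto 1).mono_left (nhdsWithin_le_nhds (s := Iio 1))
  have hfin := le_of_tendsto hlim (b := 2 * K) (by
    filter_upwards [Ioo_mem_nhdsLT (show (0:ℝ) < 1 by norm_num)] with r hr
    exact hbound r hr.1.le hr.2)
  simpa [circleSum] using hfin

lemma not_bounded_hardyIntegral_lacunary {p : ℝ} (hp : 1 ≤ p) :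
    ¬ ∃ C : ℝ, ∀ r : ℝ, 0 ≤ r → r < 1 → hardyIntegral p lacunary r ≤ C := by
  rintro ⟨C, hC⟩
  have hK : ∀ r : ℝ, 0 ≤ r → r < 1 →
      ∫ θ in (0:ℝ)..(2 * π), ‖lacunary ((r : ℂ) * Complex.exp (θ * Complex.I))‖ ≤
        2 * π * (1 + C) := by
    intro r h0 h1
    have h := hC r h0 h1
    unfold hardyIntegral at h
    rw [one_div, inv_mul_le_iff₀ two_pi_pos] at h
    have hfc := (continuous_lacunary_circle h0 h1).norm
    have hpc : Continuous fun θ : ℝ =>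
        ‖lacunary ((r : ℂ) * Complex.exp (θ * Complex.I))‖ ^ p :=
      hfc.rpow_const fun _ => Or.inr (by linarith)
    calc _ ≤ ∫ θ in (0:ℝ)..(2 * π),
          (1 + ‖lacunary ((r : ℂ) * Complex.exp (θ * Complex.I))‖ ^ p) := by
          refine intervalIntegral.integral_mono_on two_pi_pos.le (hfc.intervalIntegrable _ _)
            ((continuous_const.add hpc).intervalIntegrable _ _) fun θ _ => ?_
          set t := ‖lacunary ((r : ℂ) * Complex.exp (θ * Complex.I))‖ with ht
          have ht0 : 0 ≤ t := norm_nonneg _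
          rcases le_total t 1 with h | h
          · have := Real.rpow_nonneg ht0 p
            linarith
          · have := Real.self_le_rpow_of_one_le h hp
            linarith
      _ ≤ 2 * π * (1 + C) := by
          rw [intervalIntegral.integral_add (by simp) (hpc.intervalIntegrable _ _)]
          simp only [intervalIntegral.integral_const, sub_zero, smul_eq_mul, mul_one]
          linarith
  obtain ⟨N, hN⟩ := exists_nat_gt (max 0 (4 * (1 + C)))
  have hN0 : 0 < N := by
    have := (le_max_left _ _).trans_lt hN
    exact_mod_cast this
  have h1 := (le_integral_norm_circleSum hN0).trans (integral_norm_circleSum_le hK _)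
  have h2 : 4 * (1 + C) < N := (le_max_right _ _).trans_lt hN
  nlinarith [pi_pos]

lemma IsInner.exists_ne_zero {φ : ℂ → ℂ} (hφ : IsInner φ) : ¬ ∀ z ∈ unitDisk, φ z = 0 := by
  intro hz
  have hne : (ae (volume.restrict (Set.Ico (0:ℝ) (2 * π)))).NeBot := by
    rw [ae_neBot, Ne, Measure.restrict_eq_zero, Real.volume_Ico]
    simp [pi_pos]
  obtain ⟨θ, L, hL, hlim⟩ := hφ.2.2.exists
  have h0 : Tendsto (fun r : ℝ => φ ((r : ℂ) * Complex.exp (θ * Complex.I))) (𝓝[<] (1:ℝ)) (𝓝 0) := by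
    refine tendsto_const_nhds.congr' ?_
    filter_upwards [Ioo_mem_nhdsLT (show (0:ℝ) < 1 by norm_num)] with r hr
    refine (hz _ ?_).symm
    simp only [unitDisk, mem_ball_zero_iff, norm_mul_exp r θ hr.1.le, hr.2]
  have := tendsto_nhds_unique hlim h0
  simp [this] at hL

/-- Multiplication by an inner function is injective on analytic functions, so `φ f₀ ∈ φ H^p`
forces `f₀ ∈ H^p`. -/
lemma not_memMulHardy {p : ℝ} (hp : 1 ≤ p) {φ : ℂ → ℂ} (hφ : IsInner φ) :
    ¬ MemMulHardy p φ (fun z => φ z * lacunary z) := by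
  rintro ⟨h, ⟨hd, C, hC⟩, heq⟩
  have hopen : IsOpen unitDisk := Metric.isOpen_ball
  have hφa : AnalyticOnNhd ℂ φ unitDisk := hφ.1.analyticOnNhd hopen
  have hga : AnalyticOnNhd ℂ (lacunary - h) unitDisk :=
    (differentiableOn_lacunary.sub hd).analyticOnNhd hopen
  have hor := AnalyticOnNhd.eq_zero_or_eq_zero_of_smul_eq_zero hφa hga
    (fun z hz => by
      have := heq hz
      simp only at this
      simp only [Pi.sub_apply, smul_eq_mul, mul_sub, this, sub_self])
    (convex_ball (0:ℂ) 1).isPreconnected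
  have hlac : ∀ z ∈ unitDisk, lacunary z = h z := fun z hz =>
    sub_eq_zero.1 ((hor.resolve_left hφ.exists_ne_zero) z hz)
  refine not_bounded_hardyIntegral_lacunary hp ⟨C, fun r h0 h1 => ?_⟩
  refine le_of_eq_of_le ?_ (hC r h0 h1)
  unfold hardyIntegral
  congr 1
  refine intervalIntegral.integral_congr fun θ _ => ?_
  rw [hlac]
  simp only [unitDisk, mem_ball_zero_iff, norm_mul_exp r θ h0, h1]

/-- For an inner function `φ`, the function `φ f₀` (with `f₀` the lacunary series)
belongs to the closure of `φ H^p(𝔻)` in the Bergman norm of `A^p_α(𝔻)`, but not to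
`φ H^p(𝔻)` itself. -/
theorem inner_mul_lacunary_in_closure_not_in_inner_mul_hardy
    (p α : ℝ) (hp : 1 ≤ p) (hα : -1 < α)
    (φ : ℂ → ℂ) (hφ : IsInner φ) :
    (∃ F : ℕ → ℂ → ℂ, (∀ n, MemMulHardy p φ (F n)) ∧
      Filter.Tendsto (fun n => bergmanNorm p α (F n - fun z => φ z * lacunary z))
        Filter.atTop (nhds 0)) ∧
    ¬ MemMulHardy p φ (fun z => φ z * lacunary z) := by
  exact ⟨⟨fun n z => φ z * lacunaryPartial n z,
    fun n => ⟨lacunaryPartial n, memHardy_lacunaryPartial hp n, fun _ _ => rfl⟩,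
    tendsto_bergmanNorm p α hp hα φ hφ.2.1⟩, not_memMulHardy hp hφ⟩
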